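/- Let ρ be a density matrix on ℂ^n with spectral decomposition ρ = Σ_i p_i v_i v_i†, and let A, B be Hermitian n×n complex matrices. Then I_SLD(ρ,A) · V_ρ(B) ≥ (1/4)|Tr[ρ(AB − BA)]|². -/

import Mathlib

open Matrix
open scoped ComplexOrder

/-- The variance `V_ρ(X) = Tr[ρX²] − (Tr[ρX])²` (real parts of the traces,
which are real numbers for a density matrix `ρ` and Hermitian `X`). -/
noncomputable def matVariance {n : ℕ} (ρ X : Matrix (Fin n) (Fin n) ℂ) : ℝ :=
  ((ρ * (X * X)).trace).re - (((ρ * X).trace).re) ^ 2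

/-- The SLD skew information `I_SLD(ρ,A) = (1/2) Σ_{i,j} (p_i−p_j)²/(p_i+p_j) |v_i† A v_j|²`,
expressed via a spectral decomposition of `ρ` with eigenvalues `p` and orthonormal
eigenvectors `v`.  (Terms with `p i + p j = 0` vanish, since division by zero is zero.) -/
noncomputable def sldSkew {n : ℕ} (p : Fin n → ℝ) (v : Fin n → Fin n → ℂ)
    (A : Matrix (Fin n) (Fin n) ℂ) : ℝ :=
  (1 / 2) * ∑ i, ∑ j, (p i - p j) ^ 2 / (p i + p j) * ‖star (v i) ⬝ᵥ A.mulVec (v j)‖ ^ 2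

/-!
The variance of `B` is the second moment of the fluctuation `B₀ = B − ⟨B⟩`, and `[A, B] = [A, B₀]`.
In an eigenbasis of `ρ`,
`Tr ρ[A, B₀] = ∑ᵢⱼ (pᵢ − pⱼ) ⟨i|A|j⟩ ⟨j|B₀|i⟩` and `Tr ρB₀² = ½ ∑ᵢⱼ (pᵢ + pⱼ) |⟨i|B₀|j⟩|²`,
so the relation is the Cauchy–Schwarz inequality with weights `pᵢ + pⱼ`.
-/

-- Where `w k = 0`, the junk value `c k ^ 2 / 0 = 0` is the right one because `c k` vanishes too.
lemma norm_sum_smul_mul_sq_le {κ E : Type*} [NonUnitalSeminormedRing E] [NormedSpace ℝ E]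
    (s : Finset κ) {c w : κ → ℝ} (hw : ∀ k ∈ s, 0 ≤ w k) (hcw : ∀ k ∈ s, w k = 0 → c k = 0)
    (a b : κ → E) :
    ‖∑ k ∈ s, c k • (a k * b k)‖ ^ 2 ≤
      (∑ k ∈ s, c k ^ 2 / w k * ‖a k‖ ^ 2) * ∑ k ∈ s, w k * ‖b k‖ ^ 2 := by
  calc ‖∑ k ∈ s, c k • (a k * b k)‖ ^ 2
      ≤ (∑ k ∈ s, |c k| * (‖a k‖ * ‖b k‖)) ^ 2 := by
        gcongr
        refine norm_sum_le_of_le s fun k _ ↦ ?_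
        rw [norm_smul, Real.norm_eq_abs]
        gcongr
        exact norm_mul_le _ _
    _ ≤ (∑ k ∈ s, c k ^ 2 / w k * ‖a k‖ ^ 2) * ∑ k ∈ s, w k * ‖b k‖ ^ 2 := by
        refine s.sum_sq_le_sum_mul_sum_of_sq_le_mul
          (fun k hk ↦ mul_nonneg (div_nonneg (sq_nonneg _) (hw k hk)) (sq_nonneg _))
          (fun k hk ↦ mul_nonneg (hw k hk) (sq_nonneg _)) fun k hk ↦ ?_
        have div_mul_cancel : c k ^ 2 / w k * w k = c k ^ 2 :=
          div_mul_cancel_of_imp fun h ↦ by rw [hcw k hk h, zero_pow two_ne_zero]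
        rw [mul_pow, mul_pow, sq_abs, mul_mul_mul_comm, div_mul_cancel]

section MatrixElement

variable {ι κ R : Type*} [Fintype ι] [CommSemiring R] [StarRing R]

/-- The matrix element `⟨vᵢ|X|vⱼ⟩` of an operator `X` with respect to a family of vectors `v`,
conjugate-linear in `vᵢ`. The family need not be a basis. -/
def matrixElement (v : κ → ι → R) (X : Matrix ι ι R) (i j : κ) : R :=
  star (v i) ⬝ᵥ X *ᵥ v j

lemma star_matrixElement (v : κ → ι → R) (X : Matrix ι ι R) (i j : κ) :
    star (matrixElement v X i j) = matrixElement v Xᴴ j i := by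
  rw [matrixElement, matrixElement, star_dotProduct, star_star, star_mulVec, dotProduct_mulVec]

lemma norm_matrixElement_comm {𝕜 : Type*} [RCLike 𝕜] {X : Matrix ι ι 𝕜} (hX : X.IsHermitian)
    (v : κ → ι → 𝕜) (i j : κ) : ‖matrixElement v X i j‖ = ‖matrixElement v X j i‖ := by
  rw [← norm_star, star_matrixElement, hX.eq]

lemma sum_vecMulVec_star_eq_one_of_orthonormal [DecidableEq ι] {v : ι → ι → R}
    (hv : ∀ i j, star (v i) ⬝ᵥ v j = if i = j then 1 else 0) :
    ∑ i, vecMulVec (v i) (star (v i)) = 1 := by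
  have gram_eq_one : of (star v) * (of v)ᵀ = 1 := by
    ext i j
    rw [one_apply, ← hv i j]
    rfl
  rw [← mul_eq_one_comm.mp gram_eq_one]
  ext a b
  simp [Matrix.sum_apply, mul_apply, vecMulVec_apply]

variable [Fintype κ]

lemma matrixElement_mul [DecidableEq ι] {v : κ → ι → R}
    (hv : ∑ k, vecMulVec (v k) (star (v k)) = 1) (X Y : Matrix ι ι R) (i j : κ) :
    matrixElement v (X * Y) i j = ∑ k, matrixElement v X i k * matrixElement v Y k j := by
  calc matrixElement v (X * Y) i j
      = star (v i) ⬝ᵥ X *ᵥ (∑ k, vecMulVec (v k) (star (v k))) *ᵥ Y *ᵥ v j := by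
        rw [hv, one_mulVec, mulVec_mulVec, matrixElement]
    _ = ∑ k, matrixElement v X i k * matrixElement v Y k j := by
        simp only [sum_mulVec, mulVec_sum, dotProduct_sum, vecMulVec_mulVec, mulVec_smul,
          dotProduct_smul, op_smul_eq_mul, matrixElement]

lemma trace_sum_smul_vecMulVec_mul (p : κ → R) (v : κ → ι → R) (X : Matrix ι ι R) :
    ((∑ i, p i • vecMulVec (v i) (star (v i))) * X).trace = ∑ i, p i * matrixElement v X i i := by
  simp only [Finset.sum_mul, trace_sum, smul_mul, trace_smul, vecMulVec_mul, trace_vecMulVec,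
    smul_eq_mul, matrixElement, dotProduct_mulVec, dotProduct_comm (v _)]

lemma trace_sum_smul_vecMulVec_mul_mul [DecidableEq ι] (p : κ → R) {v : κ → ι → R}
    (hv : ∑ k, vecMulVec (v k) (star (v k)) = 1) (X Y : Matrix ι ι R) :
    ((∑ i, p i • vecMulVec (v i) (star (v i))) * (X * Y)).trace =
      ∑ i, ∑ j, p i * (matrixElement v X i j * matrixElement v Y j i) := by
  simp only [trace_sum_smul_vecMulVec_mul, matrixElement_mul hv, Finset.mul_sum]

lemma trace_sum_smul_vecMulVec_mul_commutator {R : Type*} [CommRing R] [StarRing R]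
    [DecidableEq ι] (p : κ → R) {v : κ → ι → R}
    (hv : ∑ k, vecMulVec (v k) (star (v k)) = 1) (X Y : Matrix ι ι R) :
    ((∑ i, p i • vecMulVec (v i) (star (v i))) * (X * Y - Y * X)).trace =
      ∑ i, ∑ j, (p i - p j) * (matrixElement v X i j * matrixElement v Y j i) := by
  have swap : ∑ i, ∑ j, p i * (matrixElement v Y i j * matrixElement v X j i) =
      ∑ i, ∑ j, p j * (matrixElement v X i j * matrixElement v Y j i) := by
    rw [Finset.sum_comm]
    simp only [mul_comm (matrixElement v Y _ _)]
  simp only [mul_sub, trace_sub, trace_sum_smul_vecMulVec_mul_mul p hv, swap, sub_mul,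
    Finset.sum_sub_distrib]

lemma re_trace_sum_smul_vecMulVec_mul_sq [DecidableEq ι] (p : κ → ℝ) {v : κ → ι → ℂ}
    (hv : ∑ k, vecMulVec (v k) (star (v k)) = 1) {X : Matrix ι ι ℂ} (hX : X.IsHermitian) :
    ((∑ i, (p i : ℂ) • vecMulVec (v i) (star (v i))) * (X * X)).trace.re =
      (1 / 2) * ∑ i, ∑ j, (p i + p j) * ‖matrixElement v X i j‖ ^ 2 := by
  have mul_transpose_entry (i j : κ) :
      matrixElement v X i j * matrixElement v X j i = ((‖matrixElement v X i j‖ ^ 2 : ℝ) : ℂ) := by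
    nth_rw 2 [← hX.eq]
    rw [← star_matrixElement, Complex.star_def, Complex.mul_conj, Complex.normSq_eq_norm_sq]
  have trace_eq : ((∑ i, (p i : ℂ) • vecMulVec (v i) (star (v i))) * (X * X)).trace.re =
      ∑ i, ∑ j, p i * ‖matrixElement v X i j‖ ^ 2 := by
    simp only [trace_sum_smul_vecMulVec_mul_mul _ hv, mul_transpose_entry, Complex.re_sum,
      Complex.re_ofReal_mul, Complex.ofReal_re]
  have swap : ∑ i, ∑ j, p j * ‖matrixElement v X i j‖ ^ 2 =
      ∑ i, ∑ j, p i * ‖matrixElement v X i j‖ ^ 2 := by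
    rw [Finset.sum_comm]
    simp only [norm_matrixElement_comm hX]
  simp only [add_mul, Finset.sum_add_distrib, trace_eq, swap]
  ring

lemma norm_sum_sub_mul_matrixElement_sq_le {p : κ → ℝ} (hp : ∀ i, 0 ≤ p i)
    (v : κ → ι → ℂ) (X : Matrix ι ι ℂ) {Y : Matrix ι ι ℂ} (hY : Y.IsHermitian) :
    ‖∑ i, ∑ j, ((p i : ℂ) - p j) * (matrixElement v X i j * matrixElement v Y j i)‖ ^ 2 ≤
      (∑ i, ∑ j, (p i - p j) ^ 2 / (p i + p j) * ‖matrixElement v X i j‖ ^ 2) *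
        ∑ i, ∑ j, (p i + p j) * ‖matrixElement v Y i j‖ ^ 2 := by
  have sub_eq_zero_of_add_eq_zero (i j : κ) (h : p i + p j = 0) : p i - p j = 0 := by
    linarith [hp i, hp j]
  have cauchy_schwarz := norm_sum_smul_mul_sq_le (Finset.univ : Finset (κ × κ))
    (fun k _ ↦ add_nonneg (hp k.1) (hp k.2)) (fun k _ ↦ sub_eq_zero_of_add_eq_zero k.1 k.2)
    (fun k ↦ matrixElement v X k.1 k.2) (fun k ↦ matrixElement v Y k.2 k.1)
  simpa only [Fintype.sum_prod_type, Complex.real_smul, Complex.ofReal_sub,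
    norm_matrixElement_comm hY v] using cauchy_schwarz

end MatrixElement

lemma norm_trace_mul_commutator_sq_le_sldSkew_mul {n : ℕ} {p : Fin n → ℝ}
    (hp : ∀ i, 0 ≤ p i) {v : Fin n → Fin n → ℂ} (hv : ∑ i, vecMulVec (v i) (star (v i)) = 1)
    (A : Matrix (Fin n) (Fin n) ℂ) {B : Matrix (Fin n) (Fin n) ℂ} (hB : B.IsHermitian) :
    (1 / 4) * ‖((∑ i, (p i : ℂ) • vecMulVec (v i) (star (v i))) * (A * B - B * A)).trace‖ ^ 2 ≤
      sldSkew p v A *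
        ((∑ i, (p i : ℂ) • vecMulVec (v i) (star (v i))) * (B * B)).trace.re := by
  have sldSkew_eq : sldSkew p v A =
      (1 / 2) * ∑ i, ∑ j, (p i - p j) ^ 2 / (p i + p j) * ‖matrixElement v A i j‖ ^ 2 := rfl
  rw [trace_sum_smul_vecMulVec_mul_commutator _ hv, re_trace_sum_smul_vecMulVec_mul_sq p hv hB,
    sldSkew_eq]
  linarith [norm_sum_sub_mul_matrixElement_sq_le hp v A hB]

section Fluctuation

variable {ι : Type*} [Fintype ι] [DecidableEq ι]

/-- The fluctuation `X − ⟨X⟩_ρ` of `X` about its mean in the state `ρ`. The mean is taken to be the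
real part of `Tr[ρX]`, as in `matVariance`. -/
noncomputable def fluctuation (ρ X : Matrix ι ι ℂ) : Matrix ι ι ℂ :=
  X - (ρ * X).trace.re • 1

lemma isHermitian_fluctuation (ρ : Matrix ι ι ℂ) {X : Matrix ι ι ℂ} (hX : X.IsHermitian) :
    (fluctuation ρ X).IsHermitian :=
  hX.sub (isHermitian_one.smul (IsSelfAdjoint.all _))

lemma mul_fluctuation_sub_fluctuation_mul (ρ A B : Matrix ι ι ℂ) :
    A * fluctuation ρ B - fluctuation ρ B * A = A * B - B * A := by
  simp [fluctuation, mul_sub, sub_mul]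

end Fluctuation

lemma matVariance_eq_re_trace_mul_fluctuation_sq {n : ℕ} {ρ : Matrix (Fin n) (Fin n) ℂ}
    (hρ : ρ.trace = 1) (X : Matrix (Fin n) (Fin n) ℂ) :
    matVariance ρ X = (ρ * (fluctuation ρ X * fluctuation ρ X)).trace.re := by
  set m := (ρ * X).trace.re with hm
  have expand : ρ * (fluctuation ρ X * fluctuation ρ X) =
      ρ * (X * X) - (2 * m) • (ρ * X) + m ^ 2 • ρ := by
    simp only [fluctuation, ← hm, mul_sub, sub_mul, Matrix.mul_smul, Matrix.smul_mul, mul_one,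
      one_mul]
    module
  simp only [expand, trace_add, trace_sub, trace_smul, Complex.add_re, Complex.sub_re,
    Complex.smul_re, hρ, Complex.one_re, ← hm, matVariance, smul_eq_mul]
  ring

theorem sld_coherence_variance_uncertainty_general {n : ℕ} (ρ A B : Matrix (Fin n) (Fin n) ℂ)
    (htr : ρ.trace = 1) (hB : B.IsHermitian) (p : Fin n → ℝ) (v : Fin n → Fin n → ℂ)
    (hp : ∀ i, 0 ≤ p i) (horth : ∀ i j, star (v i) ⬝ᵥ v j = if i = j then 1 else 0)
    (hdec : ρ = ∑ i, (p i : ℂ) • vecMulVec (v i) (star (v i))) :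
    (1 / 4) * ‖(ρ * (A * B - B * A)).trace‖ ^ 2 ≤ sldSkew p v A * matVariance ρ B := by
  subst hdec
  rw [matVariance_eq_re_trace_mul_fluctuation_sq htr, ← mul_fluctuation_sub_fluctuation_mul _ A B]
  exact norm_trace_mul_commutator_sq_le_sldSkew_mul hp
    (sum_vecMulVec_star_eq_one_of_orthonormal horth) A (isHermitian_fluctuation _ hB)

/-- Coherence–variance uncertainty relation at `f_SLD`:
`I_SLD(ρ,A) · V_ρ(B) ≥ (1/4)|Tr[ρ[A,B]]|²`. -/
theorem sld_coherence_variance_uncertainty {n : ℕ}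
    (ρ A B : Matrix (Fin n) (Fin n) ℂ)
    (hρ : ρ.PosSemidef) (htr : ρ.trace = 1)
    (hA : A.IsHermitian) (hB : B.IsHermitian)
    (p : Fin n → ℝ) (v : Fin n → Fin n → ℂ)
    (hp : ∀ i, 0 ≤ p i)
    (horth : ∀ i j, star (v i) ⬝ᵥ v j = if i = j then 1 else 0)
    (hdec : ρ = ∑ i, (p i : ℂ) • vecMulVec (v i) (star (v i))) :
    (1 / 4) * ‖(ρ * (A * B - B * A)).trace‖ ^ 2 ≤ sldSkew p v A * matVariance ρ B :=
  sld_coherence_variance_uncertainty_general ρ A B htr hB p v hp horth hdec
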